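/- arXiv:cs/0308028 — 4 statements merged into one kernel-verified Lean document; each statement's English description precedes it below -/
import Mathlib

section
/- In algorithm M(k,n) under m/m' and m/φ faults only, the senders along any causal chain of messages are pairwise distinct; consequently the sender-set of a message received in round r consists of exactly r distinct agents, the first of which is the instigator. -/
/-- In algorithm M(k,n) under m/m' and m/φ faults only, the
senders along any causal chain of messages are pairwise distinct; consequently
the sender-set of a message received in round r consists of exactly r distinct
agents, the first of which is the instigator (agent 0).

`recvFrom t i j` means: agent i receives, in round t, a message sent by agent j.
A message received in round r is witnessed by a chain of senders
`c : ℕ → Fin n` (indices `0, …, r-1`) with `c 0 = 0`, where `c (i+1)` received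
the chain's round-(i+1) message from `c i` and sent in round i+2, and the final
sender `c (r-1)` sent the message received in round r. -/
theorem causal_chain_senders_distinct (n r : ℕ) [NeZero n]
    (send : ℕ → Fin n → Prop)
    (recvFrom : ℕ → Fin n → Fin n → Prop)
    -- only the instigator sends in round 1
    (hround1 : ∀ j, send 1 j → j = 0)
    -- the instigator sends only in round 1
    (hinst : ∀ t, send t (0 : Fin n) → t = 1)
    -- a non-instigator sends in round t+1 only if round t is the *first* round
    -- in which it received a message (already-decided agents never send again)
    (hfirst : ∀ i : Fin n, i ≠ 0 → ∀ t, send (t + 1) i →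
        (∃ j, recvFrom t i j) ∧ ∀ t' < t, ∀ j, ¬ recvFrom t' i j)
    (hsent : ∀ t i j, recvFrom t i j → send t j)
    -- a causal chain of senders for a message received in round r
    (c : ℕ → Fin n)
    (hr : 1 ≤ r)
    (hc0 : c 0 = 0)
    (hchain : ∀ i, i + 1 < r →
        recvFrom (i + 1) (c (i + 1)) (c i) ∧ send (i + 2) (c (i + 1)))
    (p : Fin n)
    (hfinal : recvFrom r p (c (r - 1))) :
    (∀ i j, i < r → j < r → c i = c j → i = j) ∧
      ((Finset.range r).image c).card = r ∧ c 0 = 0 := by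
  have hne : ∀ i, i + 1 < r → c (i + 1) ≠ 0 := by
    intro i hi h0
    have hs := (hchain i hi).2
    rw [h0] at hs
    have := hinst _ hs
    omega
  have hlt : ∀ i j, i < j → j < r → c i ≠ c j := by
    intro i j hij hj heq
    obtain ⟨b, rfl⟩ : ∃ b, j = b + 1 := ⟨j - 1, by omega⟩
    cases i with
    | zero => exact hne b hj (by rw [← heq, hc0])
    | succ a =>
      have hrecv := (hchain a (by omega)).1
      rw [heq] at hrecv
      exact (hfirst _ (hne b hj) (b + 1) (hchain b hj).2).2 (a + 1) hij _ hrecv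
  have hinj : ∀ i j, i < r → j < r → c i = c j → i = j := by
    intro i j hi hj h
    rcases lt_trichotomy i j with h1 | h1 | h1
    · exact absurd h (hlt i j h1 hj)
    · exact h1
    · exact absurd h.symm (hlt j i h1 hi)
  refine ⟨hinj, ?_, hc0⟩
  rw [Finset.card_image_of_injOn, Finset.card_range]
  intro i hi j hj h
  exact hinj i j (by simpa using hi) (by simpa using hj) h
end

section
/- If m/m' (corruption), m/φ (loss) and φ/m' (spurious generation) faults are all possible, then Byzantine agreement is achievable in m+1 rounds among n agents of which at most m are traitors, provided n ≥ 3m+1: running Lamport's oral-message algorithm OM(m), every loyal lieutenant obeys the same order (interactive consistency condition IC1), and if the commanding general is loyal then every loyal lieutenant obeys the order the general sent (condition IC2). -/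
/-- Boolean majority of the values `f j` for `j` in the finite set `s`,
ties broken by `default`. -/
def majorityVote {n : ℕ} (default : Bool) (s : Finset (Fin n)) (f : Fin n → Bool) : Bool :=
  if (s.filter fun j => f j = true).card > (s.filter fun j => f j = false).card then true
  else if (s.filter fun j => f j = false).card > (s.filter fun j => f j = true).card then false
  else default

/-- `omValue msg default r p g` : the value that lieutenant `g` obtains from the
sub-run OM(r) of Lamport's oral-message algorithm whose relay path is `p`
(the list of generals that have relayed so far, starting with the commander).
`msg p i` is the value general `i` receives at the end of relay path `p`
(a general receiving no message uses the default order, so `msg` is total).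
In OM(0) the lieutenant uses the value received directly; in OM(r+1) it takes
the majority of the directly received value and the values obtained, via
OM(r), from each other participating lieutenant. -/
def omValue {n : ℕ} (msg : List (Fin n) → Fin n → Bool) (default : Bool) :
    ℕ → List (Fin n) → Fin n → Bool
  | 0, p, g => msg p g
  | r + 1, p, g =>
      majorityVote default (Finset.univ.filter fun j => j ∉ p)
        (fun j => if j = g then msg p g else omValue msg default r (p ++ [j]) g)

/-- The generals not on the path. -/
def offPath {n : ℕ} (p : List (Fin n)) : Finset (Fin n) := Finset.univ.filter fun j => j ∉ p

lemma mem_offPath {n : ℕ} (p : List (Fin n)) (j : Fin n) : j ∈ offPath p ↔ j ∉ p := by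
  simp [offPath]

lemma offPath_append {n : ℕ} (p : List (Fin n)) (j : Fin n) :
    offPath (p ++ [j]) = (offPath p).erase j := by
  ext x
  simp only [mem_offPath, Finset.mem_erase, List.mem_append, List.mem_singleton]
  tauto

lemma majorityVote_of_loyal {n : ℕ} (default v : Bool) (s T : Finset (Fin n)) (f : Fin n → Bool)
    (hf : ∀ j ∈ s, j ∉ T → f j = v) (hc : 2 * (s ∩ T).card < s.card) :
    majorityVote default s f = v := by
  have h1 : (s.filter fun j => f j = !v).card ≤ (s ∩ T).card := by
    apply Finset.card_le_card
    intro j hj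
    rw [Finset.mem_filter] at hj
    rw [Finset.mem_inter]
    refine ⟨hj.1, ?_⟩
    by_contra hT
    have := hf j hj.1 hT
    rw [hj.2] at this
    cases v <;> simp at this
  have h2 : (s \ T).card ≤ (s.filter fun j => f j = v).card := by
    apply Finset.card_le_card
    intro j hj
    rw [Finset.mem_sdiff] at hj
    rw [Finset.mem_filter]
    exact ⟨hj.1, hf j hj.1 hj.2⟩
  have h3 := Finset.card_sdiff_add_card_inter s T
  unfold majorityVote
  cases v
  · simp only [Bool.not_false] at h1
    rw [if_neg (by omega), if_pos (by omega)]
  · simp only [Bool.not_true] at h1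
    rw [if_pos (by omega)]

lemma majorityVote_congr {n : ℕ} (default : Bool) (s : Finset (Fin n)) (f g : Fin n → Bool)
    (h : ∀ j ∈ s, f j = g j) : majorityVote default s f = majorityVote default s g := by
  have h1 : ∀ b, (s.filter fun j => f j = b) = s.filter fun j => g j = b := by
    intro b
    apply Finset.filter_congr
    intro j hj
    rw [h j hj]
  unfold majorityVote
  rw [h1, h1]

/-- Validity of OM(r) along any path. -/
lemma om_validity {n : ℕ} (T : Finset (Fin n)) (default : Bool)
    (msg : List (Fin n) → Fin n → Bool)
    (hloyal : ∀ j : Fin n, j ∉ T → ∀ p : List (Fin n), ∀ i : Fin n,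
        msg (p ++ [j]) i = msg p j) (r : ℕ) :
    ∀ (p : List (Fin n)) (v : Bool), (∀ i, i ∉ p → i ∉ T → msg p i = v) →
      2 * (offPath p ∩ T).card + r ≤ (offPath p).card →
      ∀ g, g ∉ p → g ∉ T → omValue msg default r p g = v := by
  induction r with
  | zero =>
    intro p v hv _ g hg hgT
    exact hv g hg hgT
  | succ r ih =>
    intro p v hv hc g hg hgT
    rw [omValue]
    apply majorityVote_of_loyal default v (offPath p) T
    · intro j hj hjT
      have hjp := (mem_offPath p j).1 hj
      by_cases hjg : j = g
      · rw [if_pos hjg]; exact hv g hg hgT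
      · rw [if_neg hjg]
        apply ih
        · intro i _ _
          rw [hloyal j hjT]
          exact hv j hjp hjT
        · rw [offPath_append, Finset.erase_inter, Finset.erase_eq_of_notMem (s := offPath p ∩ T)
            (by simp [hjT]), Finset.card_erase_of_mem hj]
          omega
        · simp only [List.mem_append, List.mem_singleton, not_or]
          exact ⟨hg, fun h => hjg h.symm⟩
        · exact hgT
    · omega

/-- Agreement of OM(r) along any path. -/
lemma om_agreement {n : ℕ} (T : Finset (Fin n)) (default : Bool)
    (msg : List (Fin n) → Fin n → Bool)
    (hloyal : ∀ j : Fin n, j ∉ T → ∀ p : List (Fin n), ∀ i : Fin n,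
        msg (p ++ [j]) i = msg p j) (r : ℕ) :
    ∀ (q : List (Fin n)) (c : Fin n),
      (offPath (q ++ [c]) ∩ T).card + (if c ∈ T then 1 else 0) ≤ r →
      3 * r ≤ (offPath (q ++ [c])).card →
      ∀ g h, g ∉ q ++ [c] → h ∉ q ++ [c] → g ∉ T → h ∉ T →
        omValue msg default r (q ++ [c]) g = omValue msg default r (q ++ [c]) h := by
  induction r with
  | zero =>
    intro q c hk _ g h hg hh hgT hhT
    have hc : c ∉ T := by
      intro hc
      simp [hc] at hk
    simp only [omValue]
    rw [hloyal c hc, hloyal c hc]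
  | succ r ih =>
    intro q c hk hs g h hg hh hgT hhT
    by_cases hc : c ∈ T
    · rw [if_pos hc] at hk
      generalize q ++ [c] = p at *
      -- a loyal relay is received correctly
      have key : ∀ a b, a ∉ p → b ∉ p → a ∉ T → b ∉ T → a ≠ b →
          omValue msg default r (p ++ [a]) b = msg p a := by
        intro a b ha hb haT hbT hab
        apply om_validity T default msg hloyal r
        · intro i _ _
          exact hloyal a haT p i
        · rw [offPath_append, Finset.erase_inter, Finset.erase_eq_of_notMem (s := offPath p ∩ T)
            (by simp [haT]), Finset.card_erase_of_mem ((mem_offPath p a).2 ha)]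
          omega
        · simp only [List.mem_append, List.mem_singleton, not_or]
          exact ⟨hb, fun h => hab h.symm⟩
        · exact hbT
      rw [omValue, omValue]
      apply majorityVote_congr
      intro j hj
      have hjp : j ∉ p := (mem_offPath p j).1 hj
      by_cases hjg : j = g
      · subst hjg
        by_cases hjh : j = h
        · subst hjh; rfl
        · rw [if_pos rfl, if_neg hjh, key j h hjp hh hgT hhT hjh]
      · by_cases hjh : j = h
        · subst hjh
          rw [if_pos rfl, if_neg hjg, key j g hjp hg hhT hgT hjg]
        · rw [if_neg hjg, if_neg hjh]
          apply ih
          · rw [offPath_append, Finset.erase_inter]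
            by_cases hjT : j ∈ T
            · have hm : j ∈ offPath p ∩ T := Finset.mem_inter.2 ⟨(mem_offPath p j).2 hjp, hjT⟩
              have := Finset.card_pos.2 ⟨j, hm⟩
              rw [if_pos hjT, Finset.card_erase_of_mem hm]
              omega
            · rw [if_neg hjT, Finset.erase_eq_of_notMem (by simp [hjT])]
              omega
          · rw [offPath_append, Finset.card_erase_of_mem ((mem_offPath p j).2 hjp)]
            omega
          · simp only [List.mem_append, List.mem_singleton, not_or]
            exact ⟨hg, fun h => hjg h.symm⟩
          · simp only [List.mem_append, List.mem_singleton, not_or]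
            exact ⟨hh, fun h => hjh h.symm⟩
          · exact hgT
          · exact hhT
    · rw [if_neg hc] at hk
      have key : ∀ b, b ∉ q ++ [c] → b ∉ T →
          omValue msg default (r + 1) (q ++ [c]) b = msg q c := by
        apply om_validity T default msg hloyal (r + 1)
        · intro i _ _
          exact hloyal c hc q i
        · omega
      rw [key g hg hgT, key h hh hhT]

/-- If m/m', m/φ and φ/m' faults are all possible, Byzantine
agreement is achievable in m+1 rounds among n generals of which at most m are
traitors, provided n ≥ 3m+1: running Lamport's oral-message algorithm OM(m)
with commander 0, every loyal lieutenant obeys the same order (IC1), and if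
the commander is loyal every loyal lieutenant obeys the commander's order d
(IC2). Loyal generals follow the algorithm exactly: the loyal commander sends
its value `d` to every lieutenant, and a loyal general relays exactly the
value it received (oral messages are delivered unaltered); traitors may send
arbitrary values. -/
theorem oral_messages_byzantine_agreement (n m : ℕ) [NeZero n]
    (hn : 3 * m + 1 ≤ n)
    (T : Finset (Fin n)) (hT : T.card ≤ m)      -- the traitors
    (default : Bool)                             -- the default order (retreat)
    (d : Bool)                                   -- the commander's order
    (msg : List (Fin n) → Fin n → Bool)
    (hcomm : (0 : Fin n) ∉ T → ∀ i : Fin n, i ≠ 0 → msg [0] i = d)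
    (hloyal : ∀ j : Fin n, j ∉ T → ∀ p : List (Fin n), ∀ i : Fin n,
        msg (p ++ [j]) i = msg p j) :
    (∀ i j : Fin n, i ∉ T → j ∉ T → i ≠ 0 → j ≠ 0 →
        omValue msg default m [0] i = omValue msg default m [0] j) ∧
      ((0 : Fin n) ∉ T → ∀ i : Fin n, i ∉ T → i ≠ 0 →
        omValue msg default m [0] i = d) := by
  have h0 : offPath [(0 : Fin n)] = Finset.univ.erase 0 := by
    ext x
    simp [mem_offPath]
  have hcard : (offPath [(0 : Fin n)]).card = n - 1 := by
    rw [h0, Finset.card_erase_of_mem (Finset.mem_univ _), Finset.card_univ, Fintype.card_fin]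
  have hk : (offPath [(0 : Fin n)] ∩ T).card + (if (0 : Fin n) ∈ T then 1 else 0) ≤ m := by
    rw [h0, Finset.erase_inter, Finset.univ_inter]
    by_cases hz : (0 : Fin n) ∈ T
    · have := Finset.card_pos.2 ⟨_, hz⟩
      rw [if_pos hz, Finset.card_erase_of_mem hz]
      omega
    · rw [if_neg hz, Finset.erase_eq_of_notMem hz]
      omega
  constructor
  · intro i j hi hj hi0 hj0
    exact om_agreement T default msg hloyal m [] 0 hk
      (by rw [List.nil_append, hcard]; omega) i j (by simpa using hi0) (by simpa using hj0) hi hj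
  · intro hz i hi hi0
    apply om_validity T default msg hloyal m [0] d
    · intro a ha _
      exact hcomm hz a (by simpa using ha)
    · rw [hcard]
      omega
    · simpa using hi0
    · exact hi
end

section
/- Let K be a field, let α₁, …, αₙ be n pairwise distinct elements of K, and let m < n. Then there exists a matrix C ∈ Matrix (Fin n) (Fin n) K, depending only on α₁, …, αₙ and m, with the following property: for every polynomial g ∈ K[X] of degree < n, if h denotes the truncation of g obtained by deleting all terms of degree exceeding m, then for every i, h(αᵢ) = Σⱼ g(αⱼ) · C j i; that is, the evaluation vector b of h equals a · C where a is the evaluation vector of g. -/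
open Polynomial

/-- Let K be a field, α₁,…,αₙ pairwise distinct elements of K and
m < n. There is a matrix C (depending only on the αᵢ and m) such that for every
polynomial g of degree < n, if h is the truncation of g obtained by deleting
all terms of degree exceeding m, then the evaluation vector of h equals the
evaluation vector of g multiplied by C : for all i,
h(αᵢ) = ∑ⱼ g(αⱼ) · C j i. -/
theorem degree_reduction_matrix (K : Type*) [Field K] (n m : ℕ)
    (α : Fin n → K) (hα : Function.Injective α) (hm : m < n) :
    ∃ C : Matrix (Fin n) (Fin n) K,
      ∀ g : K[X], g.degree < n →
        ∀ h : K[X], (∀ d : ℕ, h.coeff d = if d ≤ m then g.coeff d else 0) →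
          ∀ i : Fin n, h.eval (α i) = ∑ j : Fin n, g.eval (α j) * C j i := by
  classical
  refine ⟨fun j i => ∑ d ∈ Finset.range (m + 1),
    (Lagrange.basis Finset.univ α j).coeff d * α i ^ d, ?_⟩
  intro g hg h hh i
  have hgc : ∀ d, g.coeff d
      = ∑ j : Fin n, g.eval (α j) * (Lagrange.basis Finset.univ α j).coeff d := by
    intro d
    have h1 : g = Lagrange.interpolate Finset.univ α (fun j => g.eval (α j)) :=
      Lagrange.eq_interpolate hα.injOn (by simpa using hg)
    have h2 := congrArg (fun p : K[X] => p.coeff d) h1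
    simpa [Lagrange.interpolate_apply, Polynomial.finset_sum_coeff,
      Polynomial.coeff_C_mul] using h2
  have hdeg : h.natDegree < m + 1 := by
    rw [Nat.lt_succ_iff, Polynomial.natDegree_le_iff_coeff_eq_zero]
    intro d hd
    rw [hh, if_neg (by omega)]
  rw [Polynomial.eval_eq_sum_range' hdeg]
  simp only [Finset.mul_sum]
  rw [Finset.sum_comm]
  refine Finset.sum_congr rfl fun d hd => ?_
  rw [hh, if_pos (by simpa [Nat.lt_succ_iff] using hd), hgc, Finset.sum_mul]
  exact Finset.sum_congr rfl fun j _ => mul_assoc _ _ _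
end

section
/- Shamir's scheme is perfectly secret against m curious players: let K be a finite field, let α₁, …, αₙ be pairwise distinct nonzero elements of K, and let S ⊆ {1, …, n} be a coalition with |S| ≤ m. Then for every secret s ∈ K and every assignment of share values (v_j)_{j ∈ S}, the number of polynomials g ∈ K[X] of degree ≤ m satisfying g(0) = s and g(α_j) = v_j for all j ∈ S equals |K|^(m − |S|). In particular, this count is independent of s, so the coalition's shares reveal no information about the secret. -/
open Polynomial

theorem count_interp {K ι : Type*} [Field K] [Fintype K] [DecidableEq ι]
    (T : Finset ι) (w r : ι → K) (hw : Set.InjOn w T) (k : ℕ) :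
    Set.ncard {g : K[X] | g.degree < ((T.card + k : ℕ) : WithBot ℕ) ∧ ∀ i ∈ T, g.eval (w i) = r i}
      = Fintype.card K ^ k := by
  set N := Lagrange.nodal T w with hN
  set L := Lagrange.interpolate T w r with hL
  have hNm : N.Monic := Lagrange.nodal_monic
  have hNd : N.degree = (T.card : WithBot ℕ) := Lagrange.degree_nodal
  have hLd : L.degree < (T.card : WithBot ℕ) := Lagrange.degree_interpolate_lt r hw
  have himg : {g : K[X] | g.degree < ((T.card + k : ℕ) : WithBot ℕ) ∧
      ∀ i ∈ T, g.eval (w i) = r i}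
      = (fun q : K[X] => L + N * q) '' (degreeLT K k : Set K[X]) := by
    ext g
    simp only [Set.mem_setOf_eq, Set.mem_image, SetLike.mem_coe, mem_degreeLT]
    constructor
    · rintro ⟨hd, he⟩
      have hmod : g %ₘ N = L := by
        apply Lagrange.eq_interpolate_of_eval_eq r hw
        · rw [← hNd]; exact degree_modByMonic_lt g hNm
        · intro i hi
          have h1 := congrArg (eval (w i)) (modByMonic_add_div g N)
          have h2 : eval (w i) N = 0 := Lagrange.eval_nodal_at_node hi
          simp only [eval_add, eval_mul, h2, zero_mul, add_zero] at h1
          rw [h1, he i hi]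
      have hg : L + N * (g /ₘ N) = g := by
        rw [← hmod]; exact modByMonic_add_div g N
      refine ⟨g /ₘ N, ?_, hg⟩
      by_cases hq : g /ₘ N = 0
      · rw [hq, degree_zero]; exact WithBot.bot_lt_coe k
      have hle : (N * (g /ₘ N)).degree < ((T.card + k : ℕ) : WithBot ℕ) := by
        have : N * (g /ₘ N) = g - L := by rw [eq_sub_iff_add_eq, add_comm]; exact hg
        rw [this]
        refine (degree_sub_le _ _).trans_lt (max_lt hd (hLd.trans_le ?_))
        exact_mod_cast Nat.le_add_right _ _
      rw [degree_mul, hNd, degree_eq_natDegree hq] at hle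
      rw [degree_eq_natDegree hq]
      norm_cast at hle ⊢
      omega
    · rintro ⟨q, hq, rfl⟩
      constructor
      · refine (degree_add_le _ _).trans_lt (max_lt (hLd.trans_le ?_) ?_)
        · exact_mod_cast Nat.le_add_right _ _
        · by_cases h0 : q = 0
          · rw [h0, mul_zero, degree_zero]; exact WithBot.bot_lt_coe _
          rw [degree_mul, hNd, degree_eq_natDegree h0]
          rw [degree_eq_natDegree h0] at hq
          norm_cast at hq ⊢
          omega
      · intro i hi
        have h2 : eval (w i) N = 0 := Lagrange.eval_nodal_at_node hi
        have h3 : eval (w i) L = r i := Lagrange.eval_interpolate_at_node r hw hi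
        simp [h2, h3]
  rw [himg, Set.ncard_image_of_injective]
  · rw [← Nat.card_coe_set_eq]
    have := Nat.card_congr (degreeLTEquiv K k).toEquiv
    simpa using this
  · intro a b hab
    exact mul_left_cancel₀ hNm.ne_zero (add_left_cancel hab)

/-- Shamir's scheme is perfectly secret against m curious players:
for a finite field K, pairwise distinct nonzero evaluation points α₁,…,αₙ, and
a coalition S with |S| ≤ m, for every secret s ∈ K and every assignment of
share values (v j)_{j ∈ S}, the number of polynomials g of degree ≤ m with
g(0) = s and g(αⱼ) = vⱼ for all j ∈ S equals |K|^(m − |S|) — in particular it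
is independent of s. -/
theorem shamir_perfect_secrecy (K : Type*) [Field K] [Fintype K]
    (n m : ℕ) (α : Fin n → K) (hα : Function.Injective α) (hα0 : ∀ i, α i ≠ 0)
    (S : Finset (Fin n)) (hS : S.card ≤ m)
    (s : K) (v : Fin n → K) :
    Set.ncard {g : K[X] | g.degree ≤ m ∧ g.eval 0 = s ∧ ∀ j ∈ S, g.eval (α j) = v j}
      = Fintype.card K ^ (m - S.card) := by
  have h := count_interp (Finset.insertNone S) (fun o => o.elim 0 α) (fun o => o.elim s v)
    (by
      rintro (_ | a) _ (_ | b) _ hab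
      · rfl
      · exact absurd hab.symm (hα0 b)
      · exact absurd hab (hα0 a)
      · exact congrArg some (hα hab)) (m - S.card)
  rw [← h]
  congr 1
  ext g
  have hc : (Finset.insertNone S).card + (m - S.card) = m + 1 := by
    rw [Finset.card_insertNone]; omega
  have hd : g.degree ≤ (m : WithBot ℕ) ↔ g.degree < ((m + 1 : ℕ) : WithBot ℕ) := by
    rw [← mem_degreeLE, ← mem_degreeLT, degreeLT_succ_eq_degreeLE]
  simp only [Set.mem_setOf_eq, hc, hd, Finset.forall_mem_insertNone, Option.elim]
end
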